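/- arXiv:1402.2119 — 3 statements merged into one kernel-verified Lean document; each statement's English description precedes it below -/
import Mathlib

section
/- The sum over all two-connected graphs on vertex set {1,...,n} of (-1)^(number of edges) equals -(n-2)!, for all n ≥ 2. -/
open scoped Classical

/-- A graph is two-connected if it is connected and remains connected after
deleting any single vertex (and its incident edges). -/
def TwoConnected {V : Type*} (G : SimpleGraph V) : Prop :=
  G.Connected ∧ ∀ v : V, (G.induce ({v}ᶜ : Set V)).Connected

/-!
Write a graph on `Option W` as a graph `K` on `W` together with the set `N` of neighbours of the
extra vertex. It is two-connected iff `K` is connected and, for every vertex `d` of `K`, each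
component of `K - d` meets `N`. If `K` is two-connected this says `2 ≤ |N|`, and the signs
`(-1) ^ |N|` of these sets add up to `|W| - 1`. If `K` is connected with a cut vertex `c`, the
condition does not depend on whether `c ∈ N`, so the signs cancel in pairs. Hence adding a vertex
multiplies the alternating sum by `|W| - 1`.
-/

open Finset SimpleGraph

section Finset

variable {α : Type*} [Fintype α]

theorem sum_neg_one_pow_card_eq_zero_of_insert_iff {P : Finset α → Prop} {a : α}
    (hP : ∀ s, P (insert a s) ↔ P s) : ∑ s with P s, (-1 : ℤ) ^ #s = 0 := by
  rw [sum_filter, ← powerset_univ, ← insert_erase (mem_univ a),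
    sum_powerset_insert (notMem_erase a univ), ← sum_add_distrib]
  refine sum_eq_zero fun s hs => ?_
  have has : a ∉ s := fun h => notMem_erase a univ (mem_powerset.1 hs h)
  rw [card_insert_of_notMem has, pow_succ]
  split_ifs <;> simp_all

theorem sum_neg_one_pow_card_of_one_lt_card [Nonempty α] :
    ∑ s : Finset α with 1 < #s, (-1 : ℤ) ^ #s = Fintype.card α - 1 := by
  have hsmall : ({s | ¬ 1 < #s} : Finset (Finset α)) =
      cons ∅ (univ.map ⟨singleton, singleton_injective⟩) (by simp) := by
    ext s
    simp only [mem_filter_univ, not_lt, Nat.le_one_iff_eq_zero_or_eq_one, card_eq_zero,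
      card_eq_one, mem_cons, mem_map, mem_univ, true_and, Function.Embedding.coeFn_mk, eq_comm]
  have htotal := sum_powerset_neg_one_pow_card_of_nonempty (univ_nonempty (α := α))
  rw [powerset_univ, ← sum_filter_add_sum_filter_not _ (fun s => 1 < #s), hsmall, sum_cons,
    sum_map] at htotal
  simp only [card_empty, pow_zero, Function.Embedding.coeFn_mk, card_singleton, pow_one,
    sum_const, card_univ, nsmul_eq_mul, mul_neg, mul_one] at htotal
  linarith

end Finset

section Connectivity

variable {V V' : Type*} {G : SimpleGraph V}

theorem reachable_induce_compl_singleton_or {x c d : V} (h : G.Reachable x c) (hcd : c ≠ d)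
    (hxc : x ≠ c) (hxd : x ≠ d) :
    (G.induce {d}ᶜ).Reachable ⟨x, hxd⟩ ⟨c, hcd⟩ ∨
      (G.induce {c}ᶜ).Reachable ⟨x, hxc⟩ ⟨d, hcd.symm⟩ := by
  obtain ⟨p, hp⟩ := h.exists_isPath
  by_cases hd : d ∈ p.support
  · have hc := Walk.endpoint_notMem_support_takeUntil hp hd hcd
    exact .inr ⟨(p.takeUntil d hd).induce {c}ᶜ fun z hz hzc => hc (hzc ▸ hz)⟩
  · exact .inl ⟨p.induce {d}ᶜ fun z hz hzd => hd (hzd ▸ hz)⟩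

/-- The set `N` meets every connected component of `G`; for the neighbourhood of an added vertex
this characterises connectedness of the enlarged graph. -/
def MeetsEveryComponent (G : SimpleGraph V) (N : Set V) : Prop :=
  ∀ x, ∃ y ∈ N, G.Reachable x y

/-- A component of `G - c` avoiding `d` contains a point of `N`, which is joined to `c` within that
component and hence without passing through `d`. -/
theorem exists_reachable_of_not_preconnected {N : Set V} {c d : V} (hG : G.Preconnected)
    (hc : ¬ (G.induce {c}ᶜ).Preconnected)
    (hN : MeetsEveryComponent (G.induce {c}ᶜ) (Subtype.val ⁻¹' N)) (hcd : c ≠ d) :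
    ∃ y : ({d}ᶜ : Set V), ↑y ∈ N ∧ (G.induce {d}ᶜ).Reachable ⟨c, hcd⟩ y := by
  obtain ⟨x, hx⟩ : ∃ x, ¬ (G.induce {c}ᶜ).Reachable x ⟨d, hcd.symm⟩ := by
    by_contra! h
    exact hc fun a b => (h a).trans (h b).symm
  obtain ⟨y, hy, hxy⟩ := hN x
  have hyd : ¬ (G.induce {c}ᶜ).Reachable y ⟨d, hcd.symm⟩ := fun h => hx (hxy.trans h)
  have hne : y.1 ≠ d := by
    rintro rfl
    exact hyd .rfl
  have hyc := (reachable_induce_compl_singleton_or (hG y c) hcd y.2 hne).resolve_right hyd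
  exact ⟨⟨y, hne⟩, hy, hyc.symm⟩

theorem exists_not_preconnected_induce_compl_singleton [Nontrivial V] (hG : G.Connected)
    (hG' : ¬ TwoConnected G) : ∃ c, ¬ (G.induce {c}ᶜ).Preconnected := by
  by_contra! h
  refine hG' ⟨hG, fun c => ?_⟩
  have : Nonempty ({c}ᶜ : Set V) := (Set.nonempty_compl_of_nontrivial c).to_subtype
  exact ⟨h c⟩

/-- The restriction of a graph isomorphism to the complements of corresponding vertices. -/
def isoInduceComplSingleton {G' : SimpleGraph V'} (e : G ≃g G') (v : V) :
    G.induce {v}ᶜ ≃g G'.induce {e v}ᶜ where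
  toEquiv := e.toEquiv.subtypeEquiv fun _ => not_congr e.injective.eq_iff.symm
  map_rel_iff' := e.map_rel_iff

theorem twoConnected_congr {G' : SimpleGraph V'} (e : G ≃g G') :
    TwoConnected G ↔ TwoConnected G' :=
  and_congr e.connected_iff <|
    e.toEquiv.forall_congr fun v => (isoInduceComplSingleton e v).connected_iff

theorem twoConnected_top [Nontrivial V] : TwoConnected (⊤ : SimpleGraph V) := by
  refine ⟨connected_top, fun v => ?_⟩
  have : Nonempty ({v}ᶜ : Set V) := (Set.nonempty_compl_of_nontrivial v).to_subtype
  exact induce_top _ ▸ connected_top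

theorem eq_top_of_connected_of_card_eq_two [Fintype V] (hV : Fintype.card V = 2)
    (hG : G.Connected) : G = ⊤ := by
  have : Nontrivial V := Fintype.one_lt_card_iff_nontrivial.1 (by lia)
  refine top_le_iff.1 fun a b hab => ?_
  obtain ⟨w, hw⟩ := hG.preconnected.exists_adj_of_nontrivial a
  have huniv : {a, b} = (univ : Finset V) := eq_univ_of_card _ (by rw [card_pair hab.ne, hV])
  have hwab : w ∈ ({a, b} : Finset V) := huniv ▸ mem_univ w
  obtain rfl | hwb := mem_insert.1 hwab
  · exact (hw.ne rfl).elim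
  · exact mem_singleton.1 hwb ▸ hw

end Connectivity

section addVertex

variable {W : Type*} {K : SimpleGraph W} {N : Set W}

/-- The graph obtained from `K` by adding one vertex, `none`, with neighbourhood `N`. -/
def addVertex (K : SimpleGraph W) (N : Set W) : SimpleGraph (Option W) where
  Adj
    | none, none => False
    | none, some b => b ∈ N
    | some a, none => a ∈ N
    | some a, some b => K.Adj a b
  symm := ⟨by rintro (_ | a) (_ | b) h <;> first | exact h | exact h.symm⟩
  loopless := ⟨by rintro (_ | a) h; exacts [h, K.irrefl h]⟩

/-- `K` as the subgraph of `addVertex K N` induced on the old vertices. -/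
def addVertexEmbedding (K : SimpleGraph W) (N : Set W) : K ↪g addVertex K N where
  toEmbedding := .some
  map_rel_iff' := .rfl

/-- Every graph on `Option W` arises from a unique graph on `W` by adding the vertex `none`. -/
noncomputable def addVertexEquiv [Fintype W] :
    SimpleGraph W × Finset W ≃ SimpleGraph (Option W) where
  toFun p := addVertex p.1 p.2
  invFun G := (G.comap some, univ.filter fun a => G.Adj none (some a))
  left_inv p := Prod.ext rfl (by ext a; rw [mem_filter_univ]; exact mem_coe)
  right_inv G := by
    ext (_ | a) (_ | b)
    · exact iff_of_false id G.irrefl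
    · exact mem_coe.trans (mem_filter_univ b)
    · exact (mem_coe.trans (mem_filter_univ a)).trans (G.adj_comm _ _)
    · exact .rfl

/-- Deleting the new vertex of `addVertex K N` gives back `K`. -/
def induceComplNoneIso (K : SimpleGraph W) (N : Set W) :
    K ≃g (addVertex K N).induce {none}ᶜ where
  toFun a := ⟨some a, Option.some_ne_none a⟩
  invFun
    | ⟨some a, _⟩ => a
    | ⟨none, h⟩ => (h rfl).elim
  left_inv _ := rfl
  right_inv := by rintro ⟨_ | a, h⟩; exacts [(h rfl).elim, rfl]
  map_rel_iff' := .rfl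

/-- Deletion of an old vertex commutes with adding the new one. -/
def induceComplSomeIso (K : SimpleGraph W) (N : Set W) (d : W) :
    addVertex (K.induce {d}ᶜ) (Subtype.val ⁻¹' N) ≃g (addVertex K N).induce {some d}ᶜ where
  toFun
    | none => ⟨none, (Option.some_ne_none d).symm⟩
    | some a => ⟨some a.1, fun h => a.2 (Option.some_injective W h)⟩
  invFun
    | ⟨none, _⟩ => none
    | ⟨some a, ha⟩ => some ⟨a, fun h => ha (congrArg some h)⟩
  left_inv := by rintro (_ | a) <;> rfl
  right_inv := by rintro ⟨_ | a, ha⟩ <;> rfl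
  map_rel_iff' := by rintro (_ | a) (_ | b) <;> exact .rfl

theorem connected_addVertex_iff : (addVertex K N).Connected ↔ MeetsEveryComponent K N := by
  constructor
  · intro h x
    obtain ⟨p⟩ := h.preconnected (some x) none
    obtain ⟨⟨⟨a, b⟩, hab⟩, -, ⟨y, hxy, rfl⟩, hb⟩ :=
      p.exists_boundary_dart (some '' {y | K.Reachable x y}) ⟨x, .rfl, rfl⟩ (by simp)
    cases b with
    | none => exact ⟨y, hab, hxy⟩
    | some z => exact (hb ⟨z, hxy.trans (Adj.reachable hab), rfl⟩).elim
  · intro h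
    refine (connected_iff_exists_forall_reachable _).2 ⟨none, ?_⟩
    rintro (_ | x)
    · exact .rfl
    · obtain ⟨y, hy, hxy⟩ := h x
      have hny : (addVertex K N).Adj none (some y) := hy
      exact hny.reachable.trans (hxy.symm.map (addVertexEmbedding K N).toHom)

theorem twoConnected_addVertex_iff [Nontrivial W] :
    TwoConnected (addVertex K N) ↔
      K.Connected ∧ ∀ d, MeetsEveryComponent (K.induce {d}ᶜ) (Subtype.val ⁻¹' N) := by
  have hnone := (induceComplNoneIso K N).connected_iff.symm
  have hsome (d : W) : ((addVertex K N).induce {some d}ᶜ).Connected ↔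
      MeetsEveryComponent (K.induce {d}ᶜ) (Subtype.val ⁻¹' N) :=
    (induceComplSomeIso K N d).connected_iff.symm.trans connected_addVertex_iff
  simp only [TwoConnected, Option.forall, hnone, hsome, and_iff_right_iff_imp, and_imp]
  intro _ h
  refine connected_addVertex_iff.2 fun x => ?_
  obtain ⟨d, hd⟩ := exists_ne x
  obtain ⟨y, hy, hxy⟩ := h d ⟨x, hd.symm⟩
  exact ⟨y, hy, hxy.map (Embedding.induce {d}ᶜ).toHom⟩

theorem TwoConnected.addVertex_iff [Nontrivial W] (hK : TwoConnected K) :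
    TwoConnected (addVertex K N) ↔ N.Nontrivial := by
  rw [twoConnected_addVertex_iff, and_iff_right hK.1]
  constructor
  · intro h
    have hne (d : W) : ∃ y ∈ N, y ≠ d := by
      obtain ⟨x, hx⟩ := exists_ne d
      obtain ⟨y, hy, -⟩ := h d ⟨x, hx⟩
      exact ⟨y, hy, y.2⟩
    obtain ⟨y, hy, -⟩ := hne (Classical.arbitrary W)
    obtain ⟨z, hz, hzy⟩ := hne y
    exact ⟨z, hz, y, hy, hzy⟩
  · intro hN d x
    obtain ⟨y, hy, hyd⟩ := hN.exists_ne d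
    exact ⟨⟨y, hyd⟩, hy, (hK.2 d).preconnected _ _⟩

theorem twoConnected_addVertex_insert_iff [Nontrivial W] {c : W}
    (hc : ¬ (K.induce {c}ᶜ).Preconnected) :
    TwoConnected (addVertex K (insert c N)) ↔ TwoConnected (addVertex K N) := by
  rw [twoConnected_addVertex_iff, twoConnected_addVertex_iff]
  refine and_congr_right fun hK => ⟨fun h d x => ?_, fun h d x => ?_⟩
  · have hcut : MeetsEveryComponent (K.induce {c}ᶜ) (Subtype.val ⁻¹' N) := fun x => by
      obtain ⟨y, hy, hxy⟩ := h c x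
      exact ⟨y, hy.resolve_left y.2, hxy⟩
    obtain rfl | hcd := eq_or_ne c d
    · exact hcut x
    obtain ⟨y, rfl | hy, hxy⟩ := h d x
    · obtain ⟨z, hz, hyz⟩ := exists_reachable_of_not_preconnected hK.preconnected hc hcut hcd
      exact ⟨z, hz, hxy.trans hyz⟩
    · exact ⟨y, hy, hxy⟩
  · obtain ⟨y, hy, hxy⟩ := h d x
    exact ⟨y, .inr hy, hxy⟩

theorem edgeSet_addVertex : (addVertex K N).edgeSet =
    Sym2.map some '' K.edgeSet ∪ (fun a => s(none, some a)) '' N := by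
  refine Set.Subset.antisymm (fun e he => ?_) ?_
  · induction e using Sym2.inductionOn with | _ x y
    match x, y, he with
    | none, some a, h => exact .inr ⟨a, h, rfl⟩
    | some a, none, h => exact .inr ⟨a, h, Sym2.eq_swap⟩
    | some a, some b, h => exact .inl ⟨s(a, b), h, rfl⟩
  · rintro _ (⟨e, he, rfl⟩ | ⟨a, ha, rfl⟩)
    · induction e using Sym2.inductionOn with | _ a b
      exact he
    · exact ha

theorem neg_one_pow_card_edgeSet_addVertex [Finite W] (K : SimpleGraph W) (N : Finset W) :
    (-1 : ℤ) ^ Nat.card (addVertex K N).edgeSet = (-1) ^ Nat.card K.edgeSet * (-1) ^ #N := by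
  have hdisj : Disjoint (Sym2.map some '' K.edgeSet)
      ((fun a => s(none, some a)) '' (N : Set W)) := by
    rw [Set.disjoint_left]
    rintro _ ⟨e, -, rfl⟩ ⟨a, -, ha⟩
    have hnone : none ∈ Sym2.map some e := ha ▸ Sym2.mem_mk_left none (some a)
    simp at hnone
  have hinj : Function.Injective fun a : W => s(none, some a) := fun a b h => by simpa using h
  rw [← pow_add, Nat.card_coe_set_eq, Nat.card_coe_set_eq, edgeSet_addVertex,
    Set.ncard_union_eq hdisj (Set.toFinite _) (Set.toFinite _),
    Set.ncard_image_of_injective _ (Sym2.map.injective (Option.some_injective W)),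
    Set.ncard_image_of_injective _ hinj, Set.ncard_coe_finset]

end addVertex

section Sum

/-- The sum of `(-1) ^ e(G)` over the two-connected graphs `G` on `V`. -/
noncomputable def twoConnectedSum (V : Type*) [Fintype V] : ℤ :=
  ∑ G : SimpleGraph V with TwoConnected G, (-1) ^ Nat.card G.edgeSet

theorem twoConnectedSum_congr {V V' : Type*} [Fintype V] [Fintype V'] (e : V ≃ V') :
    twoConnectedSum V = twoConnectedSum V' := by
  have hiso (G : SimpleGraph V) : G ≃g e.simpleGraph G := (Iso.comap e.symm G).symm
  refine sum_equiv e.simpleGraph (fun G => ?_) fun G _ => ?_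
  · simp only [mem_filter_univ, twoConnected_congr (hiso G)]
  · rw [Nat.card_congr (hiso G).mapEdgeSet]

theorem twoConnectedSum_of_card_eq_two {V : Type*} [Fintype V] (hV : Fintype.card V = 2) :
    twoConnectedSum V = -1 := by
  have : Nontrivial V := Fintype.one_lt_card_iff_nontrivial.1 (by lia)
  have hfilter : ({G | TwoConnected G} : Finset (SimpleGraph V)) = {⊤} := by
    ext G
    rw [mem_filter_univ, mem_singleton]
    exact ⟨fun hG => eq_top_of_connected_of_card_eq_two hV hG.1, fun hG => hG ▸ twoConnected_top⟩
  have hedges : Nat.card (⊤ : SimpleGraph V).edgeSet = 1 := by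
    rw [Nat.card_eq_fintype_card, ← edgeFinset_card, card_edgeFinset_top_eq_card_choose_two, hV,
      Nat.choose_self]
  rw [twoConnectedSum, hfilter, sum_singleton, hedges, pow_one]

variable {W : Type*} [Fintype W] [Nontrivial W]

theorem sum_twoConnected_addVertex (K : SimpleGraph W) :
    ∑ N ∈ univ.filter fun N : Finset W => TwoConnected (addVertex K N), (-1 : ℤ) ^ #N =
      if TwoConnected K then (Fintype.card W : ℤ) - 1 else 0 := by
  split_ifs with hK
  · simp only [hK.addVertex_iff, ← sum_neg_one_pow_card_of_one_lt_card, one_lt_card_iff_nontrivial]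
  · by_cases hconn : K.Connected
    · obtain ⟨c, hc⟩ := exists_not_preconnected_induce_compl_singleton hconn hK
      refine sum_neg_one_pow_card_eq_zero_of_insert_iff (a := c) fun N => ?_
      rw [coe_insert, twoConnected_addVertex_insert_iff hc]
    · refine sum_eq_zero fun N hN => ?_
      exact (hconn (twoConnected_addVertex_iff.1 (mem_filter.1 hN).2).1).elim

theorem twoConnectedSum_option :
    twoConnectedSum (Option W) = (Fintype.card W - 1) * twoConnectedSum W := by
  calc twoConnectedSum (Option W)
    _ = ∑ p ∈ univ.filter fun p : SimpleGraph W × Finset W => TwoConnected (addVertex p.1 p.2),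
          (-1) ^ Nat.card p.1.edgeSet * (-1) ^ #p.2 := by
        refine (sum_equiv addVertexEquiv (fun p => ?_) fun p _ => ?_).symm
        · simp only [mem_filter_univ]
          rfl
        · exact (neg_one_pow_card_edgeSet_addVertex p.1 p.2).symm
    _ = ∑ K : SimpleGraph W, (-1) ^ Nat.card K.edgeSet *
          ∑ N ∈ univ.filter fun N : Finset W => TwoConnected (addVertex K N), (-1) ^ #N := by
        simp only [Fintype.sum_prod_type, mul_sum, sum_filter, mul_ite, mul_zero]
    _ = ∑ K : SimpleGraph W with TwoConnected K,
          (-1) ^ Nat.card K.edgeSet * ((Fintype.card W : ℤ) - 1) := by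
        rw [sum_filter]
        simp only [sum_twoConnected_addVertex, mul_ite, mul_zero]
    _ = (Fintype.card W - 1) * twoConnectedSum W := by
        rw [← sum_mul, mul_comm, twoConnectedSum]

theorem twoConnectedSum_fin_add_two (n : ℕ) :
    twoConnectedSum (Fin (n + 2)) = -(n.factorial : ℤ) := by
  induction n with
  | zero => simp [twoConnectedSum_of_card_eq_two (Fintype.card_fin 2)]
  | succ n ih =>
    rw [twoConnectedSum_congr (finSuccEquiv (n + 2)), twoConnectedSum_option, ih, Fintype.card_fin,
      Nat.factorial_succ]
    push_cast
    ring

end Sum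

theorem twoConnected_alternating_sum_general {V : Type*} [Fintype V] (hV : 2 ≤ Fintype.card V) :
    ∑ G : SimpleGraph V with TwoConnected G, (-1 : ℤ) ^ Nat.card G.edgeSet =
      -((Fintype.card V - 2).factorial : ℤ) := by
  obtain ⟨n, hn⟩ := Nat.exists_eq_add_of_le' hV
  rw [hn, Nat.add_sub_cancel, ← twoConnectedSum_fin_add_two,
    ← twoConnectedSum_congr (Fintype.equivFinOfCardEq hn), twoConnectedSum]

/-- The sum over all two-connected graphs on `[n]` of `(-1)^(number of edges)`
equals `-(n-2)!`, for all `n ≥ 2`. -/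
theorem twoConnected_alternating_sum (n : ℕ) (hn : 2 ≤ n) :
    ∑ G ∈ Finset.univ.filter (fun G : SimpleGraph (Fin n) => TwoConnected G),
      (-1 : ℤ) ^ (Nat.card G.edgeSet) = -(Nat.factorial (n - 2) : ℤ) := by
  convert twoConnected_alternating_sum_general (V := Fin n) (by simpa)
  simp
end

section
/- The sum over all connected graphs on vertex set {1,...,n} of (-1)^(number of edges) equals (-1)^(n-1)·(n-1)!. -/
open scoped Classical

/-!
Whitney's expansion: writing `e` for the number of edges and `c` for the number of connected
components, `H` has `∑ G ≤ H, (-1) ^ e G * q ^ c G` proper colorings with `q` colors. Indeed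
`q ^ c G` counts the colorings that are constant along the edges of `G`; exchanging the sums, a
coloring contributes the alternating sum over all sets of monochromatic edges of `H`, which
vanishes unless `H` has no monochromatic edge. For complete `H` on `n` vertices the count is
`q (q - 1) ⋯ (q - n + 1)`, and the connected graphs make up the coefficient of `q`.
-/

open Polynomial SimpleGraph

section MonochromaticGraph

variable {V α : Type*} {G H : SimpleGraph V} {f : V → α}

/-- The graph of all possible monochromatic edges of the vertex coloring `f`. It is encoded as the
complement of the largest graph properly colored by `f`, so that properness of `f` becomes
disjointness in the lattice of graphs. -/
def monochromaticGraph (f : V → α) : SimpleGraph V :=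
  ((completeGraph α).comap f)ᶜ

theorem le_monochromaticGraph_iff :
    G ≤ monochromaticGraph f ↔ ∀ ⦃u v⦄, G.Adj u v → f u = f v := by
  refine ⟨fun h u v huv => ?_, fun h u v huv => ?_⟩
  · simpa using ((compl_adj _ _ _).1 (h huv)).2
  · simpa [monochromaticGraph, huv.ne] using h huv

theorem reachableSetoid_le_ker_iff :
    G.reachableSetoid ≤ Setoid.ker f ↔ G ≤ monochromaticGraph f := by
  rw [le_monochromaticGraph_iff]
  refine ⟨fun h u v huv => h huv.reachable, fun h u v huv => ?_⟩
  obtain ⟨p⟩ : G.Reachable u v := huv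
  rw [Setoid.ker_def]
  induction p with
  | nil => rfl
  | cons huv _ ih => exact (h huv).trans ih

theorem card_subtype_le_monochromaticGraph [Fintype V] [Fintype α] (G : SimpleGraph V) :
    Fintype.card {f : V → α // G ≤ monochromaticGraph f} =
      Fintype.card α ^ Nat.card G.ConnectedComponent := by
  let componentEquiv : {f : V → α // G ≤ monochromaticGraph f} ≃ (G.ConnectedComponent → α) :=
    (Equiv.subtypeEquivRight fun _ => reachableSetoid_le_ker_iff.symm).trans
      (Setoid.liftEquiv G.reachableSetoid)
  rw [Fintype.card_congr componentEquiv, Fintype.card_fun, Nat.card_eq_fintype_card]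

theorem inf_monochromaticGraph_eq_bot_iff :
    H ⊓ monochromaticGraph f = ⊥ ↔ ∀ ⦃u v⦄, H.Adj u v → f u ≠ f v := by
  rw [← disjoint_iff, monochromaticGraph, disjoint_compl_right_iff]
  rfl

/-- Proper colorings of `H` as bare functions, in the form in which Whitney's expansion counts
them. -/
def coloringEquivSubtype (H : SimpleGraph V) (α : Type*) :
    H.Coloring α ≃ {f : V → α // H ⊓ monochromaticGraph f = ⊥} where
  toFun C := ⟨C, inf_monochromaticGraph_eq_bot_iff.2 fun _ _ => C.valid⟩
  invFun f := Coloring.mk f.1 fun huv => inf_monochromaticGraph_eq_bot_iff.1 f.2 huv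
  left_inv _ := rfl
  right_inv _ := rfl

end MonochromaticGraph

/-- Proper colorings of a complete graph as embeddings of its vertices into the colors, which
turns counting them into a descending factorial. -/
def completeGraphColoringEquivEmbedding (V α : Type*) :
    (completeGraph V).Coloring α ≃ (V ↪ α) where
  toFun C := ⟨C, C.injective_of_top_hom⟩
  invFun f := Coloring.mk f fun huv => f.injective.ne huv
  left_inv _ := rfl
  right_inv _ := rfl

theorem card_connectedComponent_eq_one_iff {V : Type*} {G : SimpleGraph V} :
    Nat.card G.ConnectedComponent = 1 ↔ G.Connected := by
  rw [Nat.card_eq_one_iff_unique, connected_iff]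
  refine and_congr ⟨fun _ u v => ConnectedComponent.exact (Subsingleton.elim _ _),
    fun h => h.subsingleton_connectedComponent⟩
    ⟨fun ⟨c⟩ => c.nonempty_supp.to_type, fun ⟨v⟩ => ⟨G.connectedComponentMk v⟩⟩

section ChromaticPolynomial

variable {V : Type*} [Fintype V]

theorem sum_subgraph_neg_one_pow_card_edgeSet (H : SimpleGraph V) :
    ∑ G with G ≤ H, (-1 : ℤ) ^ Nat.card G.edgeSet = if H = ⊥ then 1 else 0 := by
  have hsum : ∑ G with G ≤ H, (-1 : ℤ) ^ Nat.card G.edgeSet =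
      ∑ s ∈ H.edgeFinset.powerset, (-1 : ℤ) ^ s.card := by
    refine Finset.sum_nbij (fun G => G.edgeFinset) (by simp) (fun _ _ _ _ => edgeFinset_inj.1)
      (fun s hs => ?_) (fun G _ => by rw [Nat.card_eq_fintype_card, edgeFinset_card])
    have hsH : (s : Set (Sym2 V)) ⊆ H.edgeSet := by simpa [← Finset.coe_subset] using hs
    have hedge : (fromEdgeSet (s : Set (Sym2 V))).edgeSet = s := by
      refine (edgeSet_eq_iff _ _).2 ⟨rfl, ?_⟩
      exact disjoint_compl_left.mono_left (hsH.trans H.edgeSet_subset_compl_diagSet)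
    refine ⟨fromEdgeSet s, ?_, Finset.coe_injective (by rw [coe_edgeFinset, hedge])⟩
    simpa using Set.sdiff_subset.trans hsH
  rw [hsum, Finset.sum_powerset_neg_one_pow_card]
  simp only [edgeFinset_eq_empty]

/-- The chromatic polynomial of `H`, encoded by Whitney's expansion over the spanning subgraphs of
`H`; that it counts proper colorings is `eval_chromaticPolynomial`. -/
noncomputable def chromaticPolynomial (H : SimpleGraph V) : ℤ[X] :=
  ∑ G with G ≤ H, monomial (Nat.card G.ConnectedComponent) ((-1) ^ Nat.card G.edgeSet)

theorem coeff_chromaticPolynomial (H : SimpleGraph V) (k : ℕ) :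
    (chromaticPolynomial H).coeff k =
      ∑ G with G ≤ H ∧ Nat.card G.ConnectedComponent = k, (-1) ^ Nat.card G.edgeSet := by
  simp only [chromaticPolynomial, finsetSum_coeff, coeff_monomial, ← Finset.sum_filter,
    Finset.filter_filter]

theorem eval_chromaticPolynomial (H : SimpleGraph V) (α : Type*) [Fintype α] :
    (chromaticPolynomial H).eval (Fintype.card α : ℤ) = Fintype.card (H.Coloring α) := by
  calc
    (chromaticPolynomial H).eval (Fintype.card α : ℤ)
      = ∑ G with G ≤ H, ∑ f : V → α with G ≤ monochromaticGraph f,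
          (-1) ^ Nat.card G.edgeSet := by
        simp only [chromaticPolynomial, eval_finsetSum, eval_monomial, Finset.sum_const,
          ← Fintype.card_subtype, card_subtype_le_monochromaticGraph, nsmul_eq_mul, Nat.cast_pow,
          mul_comm]
    _ = ∑ f : V → α, ∑ G with G ≤ H ⊓ monochromaticGraph f, (-1) ^ Nat.card G.edgeSet :=
        Finset.sum_comm' (by simp [le_inf_iff])
    _ = Fintype.card (H.Coloring α) := by
        simp only [sum_subgraph_neg_one_pow_card_edgeSet, Finset.sum_boole, ← Fintype.card_subtype,
          Fintype.card_congr (coloringEquivSubtype H α)]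

theorem chromaticPolynomial_completeGraph :
    chromaticPolynomial (completeGraph V) = descPochhammer ℤ (Fintype.card V) := by
  refine eq_of_infinite_eval_eq _ _ ((Set.infinite_range_of_injective Nat.cast_injective).mono ?_)
  rintro _ ⟨q, rfl⟩
  have hcount := eval_chromaticPolynomial (completeGraph V) (Fin q)
  rw [Fintype.card_congr (completeGraphColoringEquivEmbedding V (Fin q)), Fintype.card_embedding_eq,
    Fintype.card_fin] at hcount
  exact hcount.trans (descPochhammer_eval_eq_descFactorial ℤ q _).symm

end ChromaticPolynomial

theorem descPochhammer_eval_neg_one (R : Type*) [Ring R] (n : ℕ) :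
    (descPochhammer R n).eval (-1) = (-1) ^ n * (n.factorial : R) := by
  have h := ascPochhammer_eval_neg_eq_descPochhammer R (-1) n
  rw [neg_neg, ascPochhammer_eval_one] at h
  rw [h, ← mul_assoc, ← pow_add, Even.neg_one_pow ⟨n, rfl⟩, one_mul]

theorem coeff_one_descPochhammer_succ (R : Type*) [CommRing R] (n : ℕ) :
    (descPochhammer R (n + 1)).coeff 1 = (-1) ^ n * (n.factorial : R) := by
  rw [descPochhammer_succ_left, coeff_X_mul, coeff_zero_eq_eval_zero, eval_comp,
    ← descPochhammer_eval_neg_one]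
  simp

theorem connected_alternating_sum_general (V : Type*) [Fintype V] [Nonempty V] :
    ∑ G : SimpleGraph V with G.Connected, (-1 : ℤ) ^ Nat.card G.edgeSet =
      (-1) ^ (Fintype.card V - 1) * ((Fintype.card V - 1).factorial : ℤ) := by
  calc
    ∑ G : SimpleGraph V with G.Connected, (-1 : ℤ) ^ Nat.card G.edgeSet
      = (chromaticPolynomial (completeGraph V)).coeff 1 := by
        simp only [coeff_chromaticPolynomial, le_top, true_and, card_connectedComponent_eq_one_iff]
    _ = (descPochhammer ℤ (Fintype.card V - 1 + 1)).coeff 1 := by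
        rw [chromaticPolynomial_completeGraph, Nat.sub_add_cancel Fintype.card_pos]
    _ = (-1) ^ (Fintype.card V - 1) * ((Fintype.card V - 1).factorial : ℤ) :=
        coeff_one_descPochhammer_succ ℤ _

/-- The sum over all connected graphs on `[n]` of `(-1)^(number of edges)`
equals `(-1)^(n-1) * (n-1)!`. -/
theorem connected_alternating_sum (n : ℕ) (hn : 1 ≤ n) :
    ∑ G ∈ Finset.univ.filter (fun G : SimpleGraph (Fin n) => G.Connected),
      (-1 : ℤ) ^ (Nat.card G.edgeSet) = (-1) ^ (n - 1) * (Nat.factorial (n - 1) : ℤ) := by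
  have : Nonempty (Fin n) := Fin.pos_iff_nonempty.1 hn
  convert connected_alternating_sum_general (Fin n) <;> rw [Fintype.card_fin]
end

section
/- The sum over all two-connected graphs G on vertex set {1,...,n} of (-1)^(e(G)) times the volume of the polytope Π_G equals -n·(n-2)!. -/
open scoped Classical
open MeasureTheory

/-- The polytope `Π_G` associated with a graph `G` on `{1, ..., n+1}`:
points `(x_2, ..., x_{n+1}) ∈ ℝ^n` with `x_1 := 0` and `|x_i - x_j| < 1`
for every edge `{i,j}` of `G`. -/
def graphPolytope (n : ℕ) (G : SimpleGraph (Fin (n + 1))) : Set (Fin n → ℝ) :=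
  {y | ∀ i j : Fin (n + 1), G.Adj i j →
    |(Fin.cons (0 : ℝ) y : Fin (n + 1) → ℝ) i - (Fin.cons (0 : ℝ) y : Fin (n + 1) → ℝ) j| < 1}

/-!
Integrating over the configuration `x`, it suffices to compute, for the graph `K` joining the pairs
of points at distance less than `1`, the signed number of two-connected `G ≤ K`. The neighbours in
`K` of the leftmost point `a` form a clique. If `G` is two-connected and `a` is not joined to every
vertex, then two neighbours `s`, `t` of `a` are connected in what remains after deleting `a` and
all edges between its neighbours; inserting or removing the edge `st` then preserves
two-connectedness, is allowed by `K`, and reverses the sign. So only the graphs in which `a` is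
joined to all other vertices contribute. They exist only for complete `K`, and correspond to the
connected graphs on the remaining vertices. The connected graphs on `k + 1` vertices have signed
count `(-1) ^ k * k!`, as toggling an edge between two neighbours of a vertex `v` leaves only the
graphs in which `v` is a leaf. Finally, `K` is complete exactly on the polytope of the complete
graph, which, cut according to its leftmost point, consists of `n + 1` unit cubes up to a
unimodular change of coordinates.
-/

open SimpleGraph
open scoped symmDiff

section SignedCount

variable {V : Type*} {G H : SimpleGraph V} {s t u v : V}

theorem symmDiff_edge_adj_of_ne (h : s(u, v) ≠ s(s, t)) :
    (G ∆ edge s t).Adj u v ↔ G.Adj u v := by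
  have hedge : ¬(edge s t).Adj u v := fun hadj => h ((adj_edge ..).1 hadj).1.symm
  simp [symmDiff_def, hedge]

theorem symmDiff_edge_adj_self (hst : s ≠ t) : (G ∆ edge s t).Adj s t ↔ ¬G.Adj s t := by
  simp [symmDiff_def, edge_adj, hst]

theorem symmDiff_edge_adj_of_ne_of_ne (hs : u ≠ s) (ht : u ≠ t) :
    (G ∆ edge s t).Adj u v ↔ G.Adj u v :=
  symmDiff_edge_adj_of_ne (by simp [hs, ht])

theorem symmDiff_edge_le {K : SimpleGraph V} (hG : G ≤ K) (hst : K.Adj s t) :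
    G ∆ edge s t ≤ K :=
  symmDiff_le (le_sup_of_le_right hG) (le_sup_of_le_right ((edge_le_iff K).2 (Or.inr hst)))

theorem eq_of_neighborSet_eq_of_induce_eq {a : V} (hN : G.neighborSet a = H.neighborSet a)
    (hind : G.induce ({a}ᶜ : Set V) = H.induce {a}ᶜ) : G = H := by
  have hadj : ∀ w, G.Adj a w ↔ H.Adj a w := fun w => Set.ext_iff.1 hN w
  ext u v
  by_cases hu : u = a
  · rw [hu, hadj]
  by_cases hv : v = a
  · rw [hv, G.adj_comm, H.adj_comm, hadj]
  · exact iff_of_eq (congrArg (fun F => F.Adj ⟨u, hu⟩ ⟨v, hv⟩) hind)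

theorem exists_neighborSet_eq_and_induce_eq {a : V} {N : Set V} (ha : a ∉ N)
    (F : SimpleGraph ({a}ᶜ : Set V)) :
    ∃ G : SimpleGraph V, G.neighborSet a = N ∧ G.induce {a}ᶜ = F := by
  refine ⟨F.spanningCoe ⊔ fromRel fun u v => u = a ∧ v ∈ N, ?_, ?_⟩
  · ext w
    have hne : w ∈ N → a ≠ w := fun hw h => ha (h ▸ hw)
    simpa [map_adj', ha] using hne
  · ext ⟨u, hu⟩ ⟨v, hv⟩
    have hu' : u ≠ a := hu
    have hv' : v ≠ a := hv
    simpa [map_adj', hu', hv'] using fun h huv => h.ne (Subtype.ext huv)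

section Finite

variable [Finite V]

theorem neg_one_pow_card_edgeSet_symmDiff_edge (hst : s ≠ t) :
    (-1 : ℤ) ^ Nat.card (G ∆ edge s t).edgeSet = -(-1) ^ Nat.card G.edgeSet := by
  have := Fintype.ofFinite V
  have of_not_adj : ∀ H : SimpleGraph V, ¬H.Adj s t →
      (-1 : ℤ) ^ Nat.card (H ∆ edge s t).edgeSet = -(-1) ^ Nat.card H.edgeSet := fun H hH => by
    have hdisj : Disjoint H (edge s t) := H.disjoint_edge.2 hH
    rw [hdisj.symmDiff_eq_sup, Nat.card_eq_fintype_card, Nat.card_eq_fintype_card,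
      ← edgeFinset_card, ← edgeFinset_card, card_edgeFinset_sup_edge H hH hst, pow_succ,
      mul_neg_one]
  by_cases hadj : G.Adj s t
  · have h := of_not_adj (G ∆ edge s t) (by rw [symmDiff_edge_adj_self hst]; exact not_not.2 hadj)
    rw [symmDiff_symmDiff_cancel_right] at h
    rw [h, neg_neg]
  · exact of_not_adj G hadj

theorem card_edgeSet_eq_card_edgeSet_induce_add (G : SimpleGraph V) (v : V) :
    Nat.card G.edgeSet = Nat.card (G.induce ({v}ᶜ : Set V)).edgeSet + (G.neighborSet v).ncard := by
  have := Fintype.ofFinite V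
  have hle : G.degree v ≤ G.edgeFinset.card := by
    rw [← card_incidenceFinset_eq_degree]
    exact Finset.card_le_card (incidenceFinset_subset G v)
  rw [Nat.card_eq_fintype_card, Nat.card_eq_fintype_card, ← edgeFinset_card, ← edgeFinset_card,
    card_edgeFinset_induce_compl_singleton, card_edgeFinset_deleteIncidenceSet,
    Set.ncard_eq_toFinset_card', ← neighborFinset_def, card_neighborFinset_eq_degree]
  omega

end Finite

variable [Fintype V] [DecidableEq V]

/-- The number of graphs on `V` satisfying `P`, each graph counted with the sign `(-1) ^ e(G)`. -/
noncomputable def signedCount (P : SimpleGraph V → Prop) : ℤ :=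
  ∑ G with P G, (-1) ^ Nat.card G.edgeSet

variable {P Q : SimpleGraph V → Prop}

theorem signedCount_congr (h : ∀ G, P G ↔ Q G) : signedCount P = signedCount Q := by
  rw [funext fun G => propext (h G)]

theorem signedCount_eq_zero_of_forall_not (h : ∀ G, ¬P G) : signedCount P = 0 := by
  simp [signedCount, h]

theorem signedCount_and (P Q : SimpleGraph V → Prop) :
    signedCount (fun G => P G ∧ Q G) =
      ∑ G with P G, if Q G then (-1) ^ Nat.card G.edgeSet else 0 := by
  simp only [signedCount, ← Finset.filter_filter]
  exact Finset.sum_filter _ _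

theorem signedCount_and_add_signedCount_and_not (P Q : SimpleGraph V → Prop) :
    signedCount (fun G => P G ∧ Q G) + signedCount (fun G => P G ∧ ¬Q G) = signedCount P := by
  simp only [signedCount, ← Finset.filter_filter]
  exact Finset.sum_filter_add_sum_filter_not _ _ _

theorem sum_signedCount_and_eq {ι : Type*} [Fintype ι] (P : SimpleGraph V → Prop)
    (f : SimpleGraph V → ι) : ∑ j, signedCount (fun G => P G ∧ f G = j) = signedCount P := by
  simp only [signedCount, ← Finset.filter_filter]
  exact Finset.sum_fiberwise _ _ _

theorem signedCount_eq_zero_of_symmDiff_edge (hst : s ≠ t) (h : ∀ G, P G → P (G ∆ edge s t)) :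
    signedCount P = 0 := by
  refine Finset.sum_involution (fun G _ => G ∆ edge s t) (fun G _ => ?_) (fun G _ _ => ?_)
    (fun G hG => ?_) fun G _ => symmDiff_symmDiff_cancel_right _ _
  · rw [neg_one_pow_card_edgeSet_symmDiff_edge hst, add_neg_cancel]
  · intro h
    have hadj := symmDiff_edge_adj_self (G := G) hst
    rw [h] at hadj
    exact iff_not_self hadj
  · simpa using h G (by simpa using hG)

theorem signedCount_eq_zero_of_fiberwise_symmDiff_edge {ι : Type*} (f : SimpleGraph V → ι)
    (h : ∀ G, P G → ∃ s t, s ≠ t ∧ ∀ H, P H → f H = f G →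
      P (H ∆ edge s t) ∧ f (H ∆ edge s t) = f H) :
    signedCount P = 0 := by
  rw [← sum_signedCount_and_eq P (Set.rangeFactorization f)]
  refine Finset.sum_eq_zero fun j _ => ?_
  simp only [Subtype.ext_iff, Set.rangeFactorization_coe]
  by_cases hj : ∃ G, P G ∧ f G = j
  · obtain ⟨G, hG, hGj⟩ := hj
    obtain ⟨s, t, hst, hfiber⟩ := h G hG
    refine signedCount_eq_zero_of_symmDiff_edge hst fun H ⟨hH, hHj⟩ => ?_
    obtain ⟨htoggle, hf⟩ := hfiber H hH (hHj.trans hGj.symm)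
    exact ⟨htoggle, hf.trans hHj⟩
  · exact signedCount_eq_zero_of_forall_not fun G hG => hj ⟨G, hG⟩

theorem signedCount_neighborSet_eq_and_induce {a : V} {N : Set V} (ha : a ∉ N)
    (P : SimpleGraph ({a}ᶜ : Set V) → Prop) :
    signedCount (fun G => G.neighborSet a = N ∧ P (G.induce {a}ᶜ)) =
      (-1) ^ N.ncard * signedCount P := by
  rw [signedCount, signedCount, Finset.mul_sum]
  refine Finset.sum_nbij (fun G => G.induce {a}ᶜ) ?_ ?_ ?_ ?_ <;>
    simp only [Set.InjOn, Set.SurjOn, Finset.coe_filter, Finset.mem_filter, Finset.mem_univ,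
      true_and, Set.mem_ofPred_eq]
  · exact fun G hG => hG.2
  · exact fun G hG H hH => eq_of_neighborSet_eq_of_induce_eq (hG.1.trans hH.1.symm)
  · intro F hF
    obtain ⟨G, hN, rfl⟩ := exists_neighborSet_eq_and_induce_eq ha F
    exact ⟨G, ⟨hN, hF⟩, rfl⟩
  · intro G hG
    rw [card_edgeSet_eq_card_edgeSet_induce_add G a, hG.1, add_comm, pow_add]

end SignedCount

section Connectivity

variable {V : Type*} {G H : SimpleGraph V} {a s t : V} {S : Set V}

theorem reachable_of_forall_adj_reachable (h : ∀ u v, G.Adj u v → H.Reachable u v) {u v : V}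
    (huv : G.Reachable u v) : H.Reachable u v := by
  obtain ⟨p⟩ := huv
  induction p with
  | nil => rfl
  | cons hadj _ ih => exact (h _ _ hadj).trans ih

theorem connected_induce_symmDiff_edge (hG : (G.induce S).Connected)
    (hst : ∀ (hs : s ∈ S) (ht : t ∈ S), ((G ∆ edge s t).induce S).Reachable ⟨s, hs⟩ ⟨t, ht⟩) :
    ((G ∆ edge s t).induce S).Connected := by
  have reachable_of_adj : ∀ u v, (G.induce S).Adj u v →
      ((G ∆ edge s t).induce S).Reachable u v := by
    rintro ⟨u, hu⟩ ⟨v, hv⟩ huv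
    by_cases h : s(u, v) = s(s, t)
    · obtain ⟨rfl, rfl⟩ | ⟨rfl, rfl⟩ := Sym2.eq_iff.1 h
      exacts [hst hu hv, (hst hv hu).symm]
    · exact Adj.reachable ((symmDiff_edge_adj_of_ne h).2 huv)
  have := hG.nonempty
  exact ⟨fun u v => reachable_of_forall_adj_reachable reachable_of_adj (hG.preconnected u v)⟩

theorem connected_induce_univ_iff : (G.induce Set.univ).Connected ↔ G.Connected :=
  (induceUnivIso G).connected_iff

theorem connected_induce_symmDiff_edge_of_adj (hG : (G.induce S).Connected) (ha : a ∈ S)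
    (hs : G.Adj a s) (ht : G.Adj a t) : ((G ∆ edge s t).induce S).Connected := by
  refine connected_induce_symmDiff_edge hG fun hs' ht' => ?_
  have adj_of_adj : ∀ w (hw : w ∈ S), G.Adj a w →
      ((G ∆ edge s t).induce S).Adj ⟨a, ha⟩ ⟨w, hw⟩ := fun w _ hadj =>
    (symmDiff_edge_adj_of_ne_of_ne hs.ne ht.ne).2 hadj
  exact (adj_of_adj s hs' hs).symm.reachable.trans (adj_of_adj t ht' ht).reachable

theorem connected_symmDiff_edge_of_adj (hG : G.Connected) (hs : G.Adj a s) (ht : G.Adj a t) :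
    (G ∆ edge s t).Connected :=
  connected_induce_univ_iff.1 <|
    connected_induce_symmDiff_edge_of_adj (connected_induce_univ_iff.2 hG) (Set.mem_univ a) hs ht

/-- The graph obtained from `G` by deleting the vertex `a` and all edges between two neighbours
of `a` (the edges of the link of `a`). -/
def deleteLink (G : SimpleGraph V) (a : V) : SimpleGraph ({a}ᶜ : Set V) where
  Adj u v := G.Adj u v ∧ ¬(G.Adj a u ∧ G.Adj a v)
  symm := ⟨fun _ _ h => ⟨h.1.symm, fun h' => h.2 h'.symm⟩⟩
  loopless := ⟨fun _ h => h.1.ne rfl⟩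

theorem neighborSet_symmDiff_edge (hs : a ≠ s) (ht : a ≠ t) :
    (G ∆ edge s t).neighborSet a = G.neighborSet a :=
  Set.ext fun _ => symmDiff_edge_adj_of_ne_of_ne hs ht

theorem deleteLink_symmDiff_edge (hs : G.Adj a s) (ht : G.Adj a t) :
    deleteLink (G ∆ edge s t) a = deleteLink G a := by
  ext u v
  simp only [deleteLink, symmDiff_edge_adj_of_ne_of_ne hs.ne ht.ne]
  refine and_congr_left fun huv => symmDiff_edge_adj_of_ne fun h => huv ?_
  obtain ⟨h₁, h₂⟩ | ⟨h₁, h₂⟩ := Sym2.eq_iff.1 h <;> simp [h₁, h₂, hs, ht]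

theorem deleteLink_le_induce : deleteLink G a ≤ G.induce {a}ᶜ :=
  fun _ _ h => h.1

theorem exists_adj_deleteLink_reachable (hG : (G.induce S).Preconnected) (ha : a ∈ S)
    (u : ({a}ᶜ : Set V)) (hu : u.1 ∈ S) :
    ∃ s : ({a}ᶜ : Set V), s.1 ∈ S ∧ G.Adj a s ∧ (deleteLink G a).Reachable u s := by
  suffices ∀ (x y : S) (_ : (G.induce S).Walk x y) (hx : x.1 ≠ a), y.1 = a →
      ∃ s : ({a}ᶜ : Set V), s.1 ∈ S ∧ G.Adj a s ∧ (deleteLink G a).Reachable ⟨x, hx⟩ s from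
    (hG ⟨u, hu⟩ ⟨a, ha⟩).elim fun p => this _ _ p u.2 rfl
  intro x y p
  induction p with
  | nil => exact fun hx hy => (hx hy).elim
  | @cons x x' y hadj _ ih =>
    intro hx hy
    by_cases hax : G.Adj a x
    · exact ⟨⟨x, hx⟩, x.2, hax, .rfl⟩
    have hx' : x'.1 ≠ a := fun h => hax (h ▸ hadj.symm)
    obtain ⟨s, hsS, hs, hreach⟩ := ih hx' hy
    have hlink : (deleteLink G a).Adj ⟨x, hx⟩ ⟨x', hx'⟩ := ⟨hadj, fun h => hax h.1⟩
    exact ⟨s, hsS, hs, hlink.reachable.trans hreach⟩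

namespace TwoConnected

theorem exists_ne_adj_deleteLink_reachable (hG : TwoConnected G) (ha : ¬G.IsUniversal a) :
    ∃ s t : ({a}ᶜ : Set V), s ≠ t ∧ G.Adj a s ∧ G.Adj a t ∧ (deleteLink G a).Reachable s t := by
  obtain ⟨y, hya, hy⟩ : ∃ y, a ≠ y ∧ ¬G.Adj a y := by simpa [IsUniversal] using ha
  obtain ⟨s, -, hs, hys⟩ := exists_adj_deleteLink_reachable
    (connected_induce_univ_iff.2 hG.1).preconnected (Set.mem_univ a) ⟨y, hya.symm⟩ (Set.mem_univ y)
  have hys' : y ≠ s := fun h => hy (h ▸ hs)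
  obtain ⟨t, hts, ht, hyt⟩ := exists_adj_deleteLink_reachable (S := {s.1}ᶜ)
    (hG.2 s).preconnected hs.ne ⟨y, hya.symm⟩ hys'
  exact ⟨s, t, fun h => hts (congrArg Subtype.val h.symm), hs, ht, hys.symm.trans hyt⟩

/- Two paths join `s` and `t`, one through `a` and one avoiding `a`. Deleting a vertex other than
`s` and `t` destroys at most one of them, so the edge `st` is never needed. -/
theorem symmDiff_edge {s t : ({a}ᶜ : Set V)} (hG : TwoConnected G) (hs : G.Adj a s)
    (ht : G.Adj a t) (hst : (deleteLink G a).Reachable s t) : TwoConnected (G ∆ edge s.1 t.1) := by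
  refine ⟨connected_symmDiff_edge_of_adj hG.1 hs ht, fun v => ?_⟩
  by_cases hv : v = a
  · subst hv
    refine connected_induce_symmDiff_edge (hG.2 v) fun _ _ => ?_
    rw [← deleteLink_symmDiff_edge hs ht] at hst
    exact hst.mono deleteLink_le_induce
  · exact connected_induce_symmDiff_edge_of_adj (hG.2 v) (Ne.symm hv) hs ht

end TwoConnected

theorem twoConnected_iff_connected_induce_of_isUniversal [Nontrivial V] (ha : G.IsUniversal a) :
    TwoConnected G ↔ (G.induce {a}ᶜ).Connected := by
  refine ⟨fun hG => hG.2 a, fun hG => ⟨.of_isUniversal ha, fun v => ?_⟩⟩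
  by_cases hv : v = a
  · exact hv ▸ hG
  · refine Connected.of_isUniversal (v := ⟨a, Ne.symm hv⟩) fun w hw => ?_
    exact ha fun h => hw (Subtype.ext h)

end Connectivity

section Counting

variable {V : Type*} {G : SimpleGraph V} {a v : V}

theorem connected_iff_connected_induce_of_neighborSet_eq_singleton {s : V}
    (hs : G.neighborSet v = {s}) : G.Connected ↔ (G.induce {v}ᶜ).Connected := by
  have hvs : G.Adj v s := hs.ge rfl
  refine ⟨fun hG => ?_, fun hG => ?_⟩
  · have : Unique (G.neighborSet v) := hs ▸ inferInstance
    refine hG.induce_compl_singleton_of_degree_eq_one ?_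
    rw [← card_neighborSet_eq_degree, Fintype.card_unique]
  · rw [connected_iff_exists_forall_reachable]
    refine ⟨s, fun w => ?_⟩
    by_cases hw : w = v
    · exact hw ▸ hvs.symm.reachable
    · exact (hG.preconnected ⟨s, hvs.ne'⟩ ⟨w, hw⟩).map (Embedding.induce _).toHom

theorem eq_top_of_isClique_neighborSet_of_isUniversal (hG : G.IsClique (G.neighborSet a))
    (ha : G.IsUniversal a) : G = ⊤ := by
  rw [← isClique_univ, ← insert_neighborSet_eq_univ.2 ha]
  exact isClique_insert.2 ⟨hG, fun _ hb _ => hb⟩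

variable [Fintype V] [DecidableEq V]

theorem signedCount_connected_and_neighborSet_eq_of_nontrivial {N : Set V} (hN : N.Nontrivial) :
    signedCount (fun G => G.Connected ∧ G.neighborSet v = N) = 0 := by
  obtain ⟨s, hs, t, ht, hst⟩ := hN
  refine signedCount_eq_zero_of_symmDiff_edge hst ?_
  rintro G ⟨hG, rfl⟩
  exact ⟨connected_symmDiff_edge_of_adj hG hs ht, neighborSet_symmDiff_edge hs.ne ht.ne⟩

theorem signedCount_connected_and_neighborSet_eq_singleton {s : V} (hs : v ≠ s) :
    signedCount (fun G => G.Connected ∧ G.neighborSet v = {s}) =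
      -signedCount (V := ({v}ᶜ : Set V)) Connected := by
  calc signedCount (fun G => G.Connected ∧ G.neighborSet v = {s})
      = signedCount (fun G => G.neighborSet v = {s} ∧ (G.induce {v}ᶜ).Connected) :=
        signedCount_congr fun G => and_comm.trans <|
          and_congr_right connected_iff_connected_induce_of_neighborSet_eq_singleton
    _ = -signedCount (V := ({v}ᶜ : Set V)) Connected := by
        rw [signedCount_neighborSet_eq_and_induce (by simpa using hs), Set.ncard_singleton]
        simp

theorem signedCount_connected_eq_neg_card_mul [Nontrivial V] (v : V) :
    signedCount (V := V) Connected =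
      -(Fintype.card ({v}ᶜ : Set V) * signedCount (V := ({v}ᶜ : Set V)) Connected) := by
  rw [← sum_signedCount_and_eq Connected fun G => G.neighborSet v, ← mul_neg, ← nsmul_eq_mul,
    ← Finset.card_univ, ← Finset.sum_const]
  symm
  refine Fintype.sum_of_injective (fun s => {s.1}) (fun s t h => Subtype.ext (by simpa using h)) _ _
    (fun N hN => ?_) fun s =>
      (signedCount_connected_and_neighborSet_eq_singleton (Ne.symm s.2)).symm
  rcases N.eq_empty_or_nonempty with rfl | hne
  · refine signedCount_eq_zero_of_forall_not fun G ⟨hG, hv⟩ => ?_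
    obtain ⟨u, hu⟩ := hG.preconnected.exists_adj_of_nontrivial v
    exact Set.notMem_empty u (hv ▸ hu)
  rcases hne.exists_eq_singleton_or_nontrivial with ⟨s, rfl⟩ | hnontriv
  · refine signedCount_eq_zero_of_forall_not fun G ⟨_, hv⟩ => hN ⟨⟨s, ?_⟩, rfl⟩
    have hs : G.Adj v s := hv.ge rfl
    exact hs.ne'
  · exact signedCount_connected_and_neighborSet_eq_of_nontrivial hnontriv

theorem signedCount_connected {k : ℕ} (hV : Fintype.card V = k + 1) :
    signedCount (V := V) Connected = (-1) ^ k * k.factorial := by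
  induction k generalizing V with
  | zero =>
    obtain ⟨_⟩ := Fintype.card_eq_one_iff_nonempty_unique.1 hV
    have hconn : ∀ G : SimpleGraph V, G.Connected := fun G => .of_subsingleton
    simp [signedCount, hconn]
  | succ k ih =>
    have : Nontrivial V := Fintype.one_lt_card_iff_nontrivial.1 (by omega)
    obtain ⟨v⟩ := (inferInstance : Nonempty V)
    have hcard : Fintype.card ({v}ᶜ : Set V) = k + 1 := by
      rw [Fintype.card_compl_set, hV]
      simp
    rw [signedCount_connected_eq_neg_card_mul v, ih hcard, hcard, Nat.factorial_succ]
    push_cast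
    ring

theorem signedCount_twoConnected_and_not_isUniversal {K : SimpleGraph V}
    (hK : K.IsClique (K.neighborSet a)) :
    signedCount (fun G => (TwoConnected G ∧ G ≤ K) ∧ ¬G.IsUniversal a) = 0 := by
  refine signedCount_eq_zero_of_fiberwise_symmDiff_edge
    (fun G => (G.neighborSet a, deleteLink G a)) ?_
  rintro G ⟨⟨hG, hGK⟩, ha⟩
  obtain ⟨s, t, hst, hs, ht, hreach⟩ := hG.exists_ne_adj_deleteLink_reachable ha
  have hst' : s.1 ≠ t.1 := Subtype.coe_ne_coe.2 hst
  refine ⟨s, t, hst', ?_⟩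
  rintro H ⟨⟨hH, hHK⟩, haH⟩ hHG
  obtain ⟨hN, hlink⟩ := Prod.mk.inj hHG
  have hsH : H.Adj a s := (Set.ext_iff.1 hN s).2 hs
  have htH : H.Adj a t := (Set.ext_iff.1 hN t).2 ht
  have hN' := neighborSet_symmDiff_edge (G := H) hsH.ne htH.ne
  have hle : H ∆ edge s.1 t.1 ≤ K := symmDiff_edge_le hHK (hK (hGK hs) (hGK ht) hst')
  refine ⟨⟨⟨hH.symmDiff_edge hsH htH (hlink ▸ hreach), hle⟩, ?_⟩,
    Prod.ext hN' (deleteLink_symmDiff_edge hsH htH)⟩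
  rwa [← neighborSet_eq_compl_singleton, hN', neighborSet_eq_compl_singleton]

theorem signedCount_twoConnected_and_isUniversal [Nontrivial V] (a : V) :
    signedCount (fun G => TwoConnected G ∧ G.IsUniversal a) =
      -((Fintype.card V - 2).factorial : ℤ) := by
  obtain ⟨k, hk⟩ := Nat.exists_eq_add_of_le' (Fintype.one_lt_card (α := V))
  have hcard : Fintype.card ({a}ᶜ : Set V) = k + 1 := by
    rw [Fintype.card_compl_set, hk]
    simp
  calc signedCount (fun G => TwoConnected G ∧ G.IsUniversal a)
      = signedCount (fun G => G.neighborSet a = {a}ᶜ ∧ (G.induce {a}ᶜ).Connected) :=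
        signedCount_congr fun G => by
          rw [neighborSet_eq_compl_singleton, and_comm]
          exact and_congr_right twoConnected_iff_connected_induce_of_isUniversal
    _ = (-1) ^ (k + 1) * ((-1) ^ k * k.factorial) := by
        rw [signedCount_neighborSet_eq_and_induce (by simp), signedCount_connected hcard,
          ← Nat.card_coe_set_eq, Nat.card_eq_fintype_card, hcard]
    _ = -((Fintype.card V - 2).factorial : ℤ) := by
        rw [← mul_assoc, ← pow_add, Odd.neg_one_pow ⟨k, by ring⟩, hk]
        simp

theorem signedCount_twoConnected_le [Nontrivial V] {K : SimpleGraph V}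
    (hK : K.IsClique (K.neighborSet a)) :
    signedCount (fun G => TwoConnected G ∧ G ≤ K) =
      if K = ⊤ then -((Fintype.card V - 2).factorial : ℤ) else 0 := by
  rw [← signedCount_and_add_signedCount_and_not _ fun G => G.IsUniversal a,
    signedCount_twoConnected_and_not_isUniversal hK, add_zero]
  split_ifs with h
  · simp only [h, le_top, and_true]
    exact signedCount_twoConnected_and_isUniversal a
  · refine signedCount_eq_zero_of_forall_not fun G ⟨⟨_, hGK⟩, ha⟩ => h ?_
    exact eq_top_of_isClique_neighborSet_of_isUniversal hK fun w hw => hGK (ha hw)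

end Counting

section Proximity

variable {V : Type*} {G : SimpleGraph V} {x : V → ℝ}

/-- The graph joining two distinct vertices when their positions on the line are at distance less
than `1`. -/
def proximityGraph (x : V → ℝ) : SimpleGraph V where
  Adj i j := i ≠ j ∧ |x i - x j| < 1
  symm := ⟨fun i j h => ⟨h.1.symm, abs_sub_comm (x i) (x j) ▸ h.2⟩⟩
  loopless := ⟨fun _ h => h.1 rfl⟩

theorem isClique_neighborSet_proximityGraph {a : V} (ha : ∀ i, x a ≤ x i) :
    (proximityGraph x).IsClique ((proximityGraph x).neighborSet a) := by
  have lt_of_adj : ∀ i, (proximityGraph x).Adj a i → x i < x a + 1 := fun i hi => by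
    linarith [(abs_lt.1 hi.2).1]
  intro i hi j hj hij
  refine ⟨hij, abs_lt.2 ⟨?_, ?_⟩⟩ <;> linarith [lt_of_adj i hi, lt_of_adj j hj, ha i, ha j]

theorem abs_sub_le_length_of_le_proximityGraph (hG : G ≤ proximityGraph x) {u v : V}
    (p : G.Walk u v) : |x u - x v| ≤ p.length := by
  induction p with
  | nil => simp
  | @cons u w v hadj p ih =>
    rw [Walk.length_cons, Nat.cast_succ, add_comm]
    exact (abs_sub_le _ (x w) _).trans (add_le_add (hG hadj).2.le ih)

end Proximity

section Volume

variable {n : ℕ} {G : SimpleGraph (Fin (n + 1))} {y : Fin n → ℝ}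

/-- The points `x_1 = 0, x_2, ..., x_{n+1}` of the line encoded by `y = (x_2, ..., x_{n+1})`. -/
def points (y : Fin n → ℝ) : Fin (n + 1) → ℝ :=
  Fin.cons 0 y

@[simp]
theorem points_zero (y : Fin n → ℝ) : points y 0 = 0 :=
  rfl

@[simp]
theorem points_succ (y : Fin n → ℝ) (k : Fin n) : points y k.succ = y k :=
  rfl

theorem continuous_points : Continuous (points : (Fin n → ℝ) → Fin (n + 1) → ℝ) :=
  continuous_const.finCons continuous_id

theorem mem_graphPolytope_iff_le_proximityGraph :
    y ∈ graphPolytope n G ↔ G ≤ proximityGraph (points y) :=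
  ⟨fun h i j hij => ⟨hij.ne, h i j hij⟩, fun h _ _ hij => (h hij).2⟩

theorem isOpen_graphPolytope (G : SimpleGraph (Fin (n + 1))) : IsOpen (graphPolytope n G) := by
  have hpoint := continuous_pi_iff.1 (continuous_points (n := n))
  simp only [graphPolytope, Set.ofPred_forall]
  exact isOpen_iInter_of_finite fun i => isOpen_iInter_of_finite fun j =>
    isOpen_iInter_of_finite fun _ => isOpen_lt ((hpoint i).sub (hpoint j)).abs continuous_const

theorem volume_graphPolytope_lt_top (hG : G.Connected) : volume (graphPolytope n G) < ⊤ := by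
  choose p _ using fun j : Fin n => (hG 0 j.succ).exists_walk_length_eq_dist
  refine (measure_mono (t := Set.Icc (fun j => -((p j).length : ℝ)) fun j => (p j).length)
    fun y hy => ?_).trans_lt isCompact_Icc.measure_lt_top
  have hbound : ∀ j, |y j| ≤ (p j).length := fun j => by
    simpa using abs_sub_le_length_of_le_proximityGraph
      (mem_graphPolytope_iff_le_proximityGraph.1 hy) (p j)
  exact ⟨fun j => (abs_le.1 (hbound j)).1, fun j => (abs_le.1 (hbound j)).2⟩

/-- The change of coordinates on configurations that moves the origin of the line to the point
`points y k.succ`; the old origin takes over the coordinate `k`. -/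
def recenter (k : Fin n) : (Fin n → ℝ) →ₗ[ℝ] (Fin n → ℝ) where
  toFun y j := if j = k then -y k else y j - y k
  map_add' y z := by
    ext j
    simp only [Pi.add_apply]
    split_ifs <;> ring
  map_smul' c y := by
    ext j
    simp only [Pi.smul_apply, smul_eq_mul, RingHom.id_apply]
    split_ifs <;> ring

theorem recenter_comp_self (k : Fin n) : recenter k ∘ₗ recenter k = LinearMap.id := by
  ext1 y
  ext j
  by_cases hj : j = k <;> simp [recenter, hj]

theorem volume_preimage_recenter (k : Fin n) (s : Set (Fin n → ℝ)) :
    volume (recenter k ⁻¹' s) = volume s := by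
  have hdet : LinearMap.det (recenter k) * LinearMap.det (recenter k) = 1 := by
    rw [← LinearMap.det_comp, recenter_comp_self, LinearMap.det_id]
  have habs : |LinearMap.det (recenter k)| = 1 := by
    rcases mul_self_eq_one_iff.1 hdet with h | h <;> simp [h]
  rw [Measure.addHaar_preimage_linearMap _ (left_ne_zero_of_mul_eq_one hdet), abs_inv, habs]
  simp

/-- The configurations in which every point other than the `i`-th lies in `I`, as seen from the
`i`-th point. For `I` the unit interval, the `i`-th point is the leftmost one. -/
def cell (i : Fin (n + 1)) (I : Set ℝ) : Set (Fin n → ℝ) :=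
  {y | ∀ j, j ≠ i → points y j - points y i ∈ I}

theorem cell_zero (I : Set ℝ) : cell (n := n) 0 I = Set.univ.pi fun _ => I := by
  ext y
  simp [cell, Fin.forall_fin_succ]

theorem cell_succ (k : Fin n) (I : Set ℝ) :
    cell k.succ I = recenter k ⁻¹' Set.univ.pi fun _ => I := by
  ext y
  have hk : (0 : Fin (n + 1)) ≠ k.succ := (Fin.succ_ne_zero k).symm
  simp only [cell, Set.mem_ofPred_eq, Fin.forall_fin_succ, points_zero, points_succ, zero_sub,
    ne_eq, Fin.succ_inj, Set.mem_preimage, Set.mem_univ_pi, recenter, LinearMap.coe_mk,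
    AddHom.coe_mk]
  constructor
  · rintro ⟨hzero, hsucc⟩ j
    split_ifs with hj
    · exact hzero hk
    · exact hsucc j hj
  · exact fun h => ⟨fun _ => by simpa using h k, fun j hj => by simpa [hj] using h j⟩

theorem volume_cell (i : Fin (n + 1)) (I : Set ℝ) : volume (cell i I) = volume I ^ n := by
  have hpi : volume (Set.univ.pi fun _ : Fin n => I) = volume I ^ n := by
    simp [volume_pi_pi]
  cases i using Fin.cases with
  | zero => rw [cell_zero, hpi]
  | succ k => rw [cell_succ, volume_preimage_recenter, hpi]

theorem measurableSet_cell (i : Fin (n + 1)) {I : Set ℝ} (hI : MeasurableSet I) :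
    MeasurableSet (cell i I) := by
  have hpoint := measurable_pi_iff.1 (continuous_points (n := n)).measurable
  simp only [cell, Set.ofPred_forall]
  exact .iInter fun j => .iInter fun _ => ((hpoint j).sub (hpoint i)) hI

theorem pairwise_disjoint_cell_Ioo :
    Pairwise (Function.onFun Disjoint fun i : Fin (n + 1) => cell i (Set.Ioo 0 1)) :=
  fun i j hij => Set.disjoint_left.2 fun _ hi hj => by
    linarith [(hi j hij.symm).1, (hj i hij).1]

theorem cell_Ioo_subset_graphPolytope_top (i : Fin (n + 1)) :
    cell i (Set.Ioo 0 1) ⊆ graphPolytope n ⊤ := by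
  intro y hy
  have hmem : ∀ j, 0 ≤ points y j - points y i ∧ points y j - points y i < 1 := fun j => by
    by_cases hj : j = i
    · simp [hj]
    · exact ⟨(hy j hj).1.le, (hy j hj).2⟩
  intro j k _
  change |points y j - points y k| < 1
  rw [abs_lt]
  constructor <;> linarith [hmem j, hmem k]

theorem graphPolytope_top_subset_iUnion_cell_Icc :
    graphPolytope n ⊤ ⊆ ⋃ i, cell i (Set.Icc 0 1) := by
  intro y hy
  obtain ⟨i, hi⟩ := Finite.exists_min (points y)
  exact Set.mem_iUnion.2 ⟨i, fun j hj =>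
    ⟨sub_nonneg.2 (hi j), (le_abs_self _).trans (hy j i hj).le⟩⟩

theorem volume_graphPolytope_top : volume (graphPolytope n ⊤) = n + 1 := by
  apply le_antisymm
  · calc volume (graphPolytope n ⊤)
        ≤ ∑ i : Fin (n + 1), volume (cell i (Set.Icc (0 : ℝ) 1)) :=
          (measure_mono graphPolytope_top_subset_iUnion_cell_Icc).trans
            (measure_iUnion_fintype_le _ _)
      _ = n + 1 := by simp [volume_cell]
  · calc (n + 1 : ENNReal) = ∑ i : Fin (n + 1), volume (cell i (Set.Ioo (0 : ℝ) 1)) := by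
          simp [volume_cell]
      _ = volume (⋃ i : Fin (n + 1), cell i (Set.Ioo (0 : ℝ) 1)) := by
          rw [measure_iUnion pairwise_disjoint_cell_Ioo
            fun i => measurableSet_cell i measurableSet_Ioo, tsum_fintype]
      _ ≤ volume (graphPolytope n ⊤) :=
          measure_mono (Set.iUnion_subset cell_Ioo_subset_graphPolytope_top)

theorem sum_twoConnected_mul_indicator_graphPolytope (hn : 1 ≤ n) (y : Fin n → ℝ) :
    ∑ G : SimpleGraph (Fin (n + 1)) with TwoConnected G,
      (-1 : ℝ) ^ Nat.card G.edgeSet * (graphPolytope n G).indicator 1 y =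
    -((n - 1).factorial : ℝ) * (graphPolytope n ⊤).indicator 1 y := by
  have : Nontrivial (Fin (n + 1)) := Fin.nontrivial_iff_two_le.2 (by omega)
  obtain ⟨a, ha⟩ := Finite.exists_min (points y)
  have hcount := signedCount_twoConnected_le (isClique_neighborSet_proximityGraph ha)
  rw [signedCount_and, Fintype.card_fin, show n + 1 - 2 = n - 1 by omega] at hcount
  simp only [Set.indicator_apply, mem_graphPolytope_iff_le_proximityGraph, Pi.one_apply, mul_ite,
    mul_one, mul_zero, top_le_iff]
  exact_mod_cast hcount

theorem integral_indicator_graphPolytope (G : SimpleGraph (Fin (n + 1))) :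
    ∫ y, (graphPolytope n G).indicator (1 : (Fin n → ℝ) → ℝ) y =
      (volume (graphPolytope n G)).toReal :=
  integral_indicator_one (isOpen_graphPolytope G).measurableSet

theorem integrable_indicator_graphPolytope (hG : G.Connected) :
    Integrable ((graphPolytope n G).indicator (1 : (Fin n → ℝ) → ℝ)) :=
  (integrable_indicator_iff (isOpen_graphPolytope G).measurableSet).2
    (integrableOn_const (volume_graphPolytope_lt_top hG).ne)

end Volume

/-- The sum over all two-connected graphs `G` on a vertex set of size `n+1` of
`(-1)^(e(G))` times the volume of `Π_G` equals `-(n+1)·(n-1)!`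
(i.e. `-m·(m-2)!` for `m = n+1` vertices). -/
theorem twoConnected_polytope_alternating_sum (n : ℕ) (hn : 1 ≤ n) :
    ∑ G ∈ Finset.univ.filter (fun G : SimpleGraph (Fin (n + 1)) => TwoConnected G),
      (-1 : ℝ) ^ (Nat.card G.edgeSet) * (volume (graphPolytope n G)).toReal
      = -((n + 1 : ℝ) * (Nat.factorial (n - 1) : ℝ)) := by
  have hintegrable : ∀ G ∈ Finset.univ.filter (fun G : SimpleGraph (Fin (n + 1)) => TwoConnected G),
      Integrable fun y : Fin n → ℝ =>
        (-1 : ℝ) ^ Nat.card G.edgeSet * (graphPolytope n G).indicator 1 y := fun G hG =>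
    (integrable_indicator_graphPolytope (Finset.mem_filter.1 hG).2.1).const_mul _
  have hvolume : (volume (graphPolytope n ⊤)).toReal = n + 1 := by
    rw [volume_graphPolytope_top]
    exact_mod_cast ENNReal.toReal_natCast (n + 1)
  simp only [← integral_indicator_graphPolytope, ← integral_const_mul]
  rw [← integral_finsetSum _ hintegrable]
  simp only [sum_twoConnected_mul_indicator_graphPolytope hn]
  rw [integral_const_mul, integral_indicator_graphPolytope, hvolume]
  ring
end
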